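/- Assume the growth conditions (GC) and the compactness-continuity conditions (CC). Let g₀ be a measurable selector, v₀ := V_{g₀}, and g₁ a measurable selector with T(v₀^e) = T_{g₁}(v₀^e). If V_{g₁} = v₀^e, then V_{g₁} = v*, the unique lower semicontinuous function of finite W-norm satisfying v* = T v*; hence g₁ is an optimal stationary policy. -/

import Mathlib

open MeasureTheory ProbabilityTheory Filter Topology
open scoped ENNReal

/-- The weighted norm `‖u‖_W = sup_x |u x| / W x`, valued in `ℝ≥0∞`. -/
noncomputable def WNorm {X : Type*} (W u : X → ℝ) : ℝ≥0∞ :=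
  ⨆ x, ENNReal.ofReal (|u x| / W x)

/-- The dynamic programming (Bellman) operator
`Tu(x) = inf_{a ∈ A(x)} [C(x,a) + α ∫ u dQ(·|x,a)]`. -/
noncomputable def Tbell {X A : Type*} [MeasurableSpace X] [MeasurableSpace A]
    (Adm : X → Set A) (Q : Kernel (X × A) X) (C : X × A → ℝ) (α : ℝ)
    (u : X → ℝ) (x : X) : ℝ :=
  sInf ((fun a => C (x, a) + α * ∫ y, u y ∂(Q (x, a))) '' Adm x)

/-- The lower semicontinuous envelope of `u : X → ℝ`, computed in the extended
reals: `uᵉ(x) = sup_{r>0} inf_{y ∈ B_r(x)} u(y)`. -/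
noncomputable def lscEnvE {X : Type*} [MetricSpace X] (u : X → ℝ) (x : X) : EReal :=
  ⨆ r ∈ Set.Ioi (0 : ℝ), ⨅ y ∈ Metric.ball x r, (u y : EReal)

/-!
Integrating against `Q (x, a)` multiplies a `W`-bound by at most `β`, so the Bellman operator is an
`αβ`-contraction for the `W`-norm and has at most one measurable fixed point of finite `W`-norm.
If the value function `v₁` of `g₁` equals the function that `g₁` improves upon, then the fixed point
equation `v₁ = T_{g₁} v₁` and the improvement equation `T v₁ = T_{g₁} v₁` give `v₁ = T v₁`.
-/

theorem abs_sInf_image_sub_sInf_image_le {ι : Type*} {s : Set ι} {f g : ι → ℝ} {c : ℝ}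
    (hs : s.Nonempty) (hf : BddBelow (f '' s)) (hg : BddBelow (g '' s))
    (hfg : ∀ i ∈ s, |f i - g i| ≤ c) : |sInf (f '' s) - sInf (g '' s)| ≤ c := by
  have sInf_sub_le {f g : ι → ℝ} (hf : BddBelow (f '' s)) (hfg : ∀ i ∈ s, |f i - g i| ≤ c) :
      sInf (f '' s) - c ≤ sInf (g '' s) := by
    refine le_csInf (hs.image g) (Set.forall_mem_image.2 fun i hi => ?_)
    linarith [csInf_le hf (Set.mem_image_of_mem f hi), (abs_le.1 (hfg i hi)).2]
  have hgf : ∀ i ∈ s, |g i - f i| ≤ c := fun i hi => abs_sub_comm (f i) (g i) ▸ hfg i hi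
  exact abs_sub_le_iff.2 ⟨by linarith [sInf_sub_le hf hfg], by linarith [sInf_sub_le hg hgf]⟩

section WeightedNorm

variable {X : Type*} {W u w : X → ℝ}

theorem wNorm_le_ofReal_iff (hW : ∀ x, 0 < W x) {c : ℝ} (hc : 0 ≤ c) :
    WNorm W u ≤ ENNReal.ofReal c ↔ ∀ x, |u x| ≤ c * W x := by
  simp only [WNorm, iSup_le_iff, ENNReal.ofReal_le_ofReal_iff hc, div_le_iff₀ (hW _)]

theorem abs_le_toReal_wNorm_mul (hW : ∀ x, 0 < W x) (hu : WNorm W u < ⊤) (x : X) :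
    |u x| ≤ (WNorm W u).toReal * W x :=
  (wNorm_le_ofReal_iff hW ENNReal.toReal_nonneg).1 (ENNReal.ofReal_toReal hu.ne).ge x

theorem wNorm_sub_lt_top (hW : ∀ x, 0 < W x) (hu : WNorm W u < ⊤) (hw : WNorm W w < ⊤) :
    WNorm W (u - w) < ⊤ := by
  refine lt_of_le_of_lt ((wNorm_le_ofReal_iff hW (c := (WNorm W u).toReal + (WNorm W w).toReal)
    (by positivity)).2 fun x => ?_) ENNReal.ofReal_lt_top
  calc |u x - w x| ≤ |u x| + |w x| := abs_sub _ _
    _ ≤ (WNorm W u).toReal * W x + (WNorm W w).toReal * W x :=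
      add_le_add (abs_le_toReal_wNorm_mul hW hu x) (abs_le_toReal_wNorm_mul hW hw x)
    _ = ((WNorm W u).toReal + (WNorm W w).toReal) * W x := (add_mul _ _ _).symm

theorem eq_of_wNorm_sub_eq_zero (hW : ∀ x, 0 < W x) (h : WNorm W (u - w) = 0) : u = w := by
  funext x
  have habs : |u x - w x| ≤ 0 := by
    simpa [h] using abs_le_toReal_wNorm_mul hW (h.trans_lt ENNReal.zero_lt_top) x
  exact sub_eq_zero.1 (abs_nonpos_iff.1 habs)

variable [MeasurableSpace X] {μ : Measure X}

theorem integrable_of_wNorm_lt_top (hW : ∀ x, 0 < W x) (hWint : Integrable W μ)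
    (humeas : AEStronglyMeasurable u μ) (hu : WNorm W u < ⊤) : Integrable u μ :=
  (hWint.const_mul _).mono' humeas (.of_forall (abs_le_toReal_wNorm_mul hW hu))

theorem abs_integral_le_toReal_wNorm_mul (hW : ∀ x, 0 < W x) (hWint : Integrable W μ)
    (hu : WNorm W u < ⊤) : |∫ x, u x ∂μ| ≤ (WNorm W u).toReal * ∫ x, W x ∂μ := by
  rw [← integral_const_mul]
  exact norm_integral_le_of_norm_le (f := u) (hWint.const_mul _)
    (.of_forall (abs_le_toReal_wNorm_mul hW hu))

end WeightedNorm

section IntegralOfLIntegral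

variable {X : Type*} [MeasurableSpace X] {μ : Measure X} {f : X → ℝ} {b : ℝ}

theorem integrable_of_lintegral_ofReal_le (hfmeas : AEStronglyMeasurable f μ) (hf : 0 ≤ᵐ[μ] f)
    (hb : ∫⁻ x, ENNReal.ofReal (f x) ∂μ ≤ ENNReal.ofReal b) : Integrable f μ :=
  (lintegral_ofReal_ne_top_iff_integrable hfmeas hf).1 (hb.trans_lt ENNReal.ofReal_lt_top).ne

theorem integral_le_of_lintegral_ofReal_le (hfmeas : AEStronglyMeasurable f μ) (hf : 0 ≤ᵐ[μ] f)
    (hb₀ : 0 ≤ b) (hb : ∫⁻ x, ENNReal.ofReal (f x) ∂μ ≤ ENNReal.ofReal b) : ∫ x, f x ∂μ ≤ b := by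
  rw [integral_eq_lintegral_of_nonneg_ae hf hfmeas]
  exact ENNReal.toReal_le_of_le_ofReal hb₀ hb

end IntegralOfLIntegral

section Bellman

variable {X A : Type*} [MeasurableSpace X] [MeasurableSpace A] {Adm : X → Set A}
  {Q : Kernel (X × A) X} {C : X × A → ℝ} {α β : ℝ} {W u w : X → ℝ}

theorem bddBelow_image_cost_add_integral (hW : ∀ x, 0 < W x) {x : X}
    (hCbdd : BddBelow ((fun a => C (x, a)) '' Adm x)) (hα : 0 ≤ α)
    (hWint : ∀ a ∈ Adm x, Integrable W (Q (x, a)))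
    (hQW : ∀ a ∈ Adm x, ∫ y, W y ∂(Q (x, a)) ≤ β * W x) (hu : WNorm W u < ⊤) :
    BddBelow ((fun a => C (x, a) + α * ∫ y, u y ∂(Q (x, a))) '' Adm x) := by
  obtain ⟨m, hm⟩ := hCbdd
  refine ⟨m + α * -((WNorm W u).toReal * (β * W x)), Set.forall_mem_image.2 fun a ha => ?_⟩
  have hint : |∫ y, u y ∂(Q (x, a))| ≤ (WNorm W u).toReal * (β * W x) :=
    (abs_integral_le_toReal_wNorm_mul hW (hWint a ha) hu).trans
      (mul_le_mul_of_nonneg_left (hQW a ha) ENNReal.toReal_nonneg)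
  exact add_le_add (hm (Set.mem_image_of_mem _ ha))
    (mul_le_mul_of_nonneg_left (neg_le_of_abs_le hint) hα)

theorem abs_tbell_sub_tbell_le (hW : ∀ x, 0 < W x) {x : X} (hAne : (Adm x).Nonempty)
    (hCbdd : BddBelow ((fun a => C (x, a)) '' Adm x)) (hα : 0 ≤ α)
    (hWint : ∀ a ∈ Adm x, Integrable W (Q (x, a)))
    (hQW : ∀ a ∈ Adm x, ∫ y, W y ∂(Q (x, a)) ≤ β * W x)
    (humeas : Measurable u) (hu : WNorm W u < ⊤) (hwmeas : Measurable w) (hw : WNorm W w < ⊤) :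
    |Tbell Adm Q C α u x - Tbell Adm Q C α w x| ≤
      α * β * (WNorm W (u - w)).toReal * W x := by
  refine abs_sInf_image_sub_sInf_image_le hAne
    (bddBelow_image_cost_add_integral hW hCbdd hα hWint hQW hu)
    (bddBelow_image_cost_add_integral hW hCbdd hα hWint hQW hw) fun a ha => ?_
  have huint := integrable_of_wNorm_lt_top hW (hWint a ha) humeas.aestronglyMeasurable hu
  have hwint := integrable_of_wNorm_lt_top hW (hWint a ha) hwmeas.aestronglyMeasurable hw
  calc |C (x, a) + α * ∫ y, u y ∂(Q (x, a)) - (C (x, a) + α * ∫ y, w y ∂(Q (x, a)))|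
      = α * |∫ y, (u - w) y ∂(Q (x, a))| := by
        rw [add_sub_add_left_eq_sub, ← mul_sub, abs_mul, abs_of_nonneg hα,
          integral_sub' huint hwint]
    _ ≤ α * ((WNorm W (u - w)).toReal * ∫ y, W y ∂(Q (x, a))) := by
        gcongr
        exact abs_integral_le_toReal_wNorm_mul hW (hWint a ha) (wNorm_sub_lt_top hW hu hw)
    _ ≤ α * ((WNorm W (u - w)).toReal * (β * W x)) := by
        gcongr
        exact hQW a ha
    _ = α * β * (WNorm W (u - w)).toReal * W x := by ring

theorem wNorm_tbell_sub_tbell_le (hW : ∀ x, 0 < W x) (hAne : ∀ x, (Adm x).Nonempty)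
    (hCbdd : ∀ x, BddBelow ((fun a => C (x, a)) '' Adm x)) (hα : 0 ≤ α) (hβ : 0 ≤ β)
    (hWint : ∀ x, ∀ a ∈ Adm x, Integrable W (Q (x, a)))
    (hQW : ∀ x, ∀ a ∈ Adm x, ∫ y, W y ∂(Q (x, a)) ≤ β * W x)
    (humeas : Measurable u) (hu : WNorm W u < ⊤) (hwmeas : Measurable w) (hw : WNorm W w < ⊤) :
    WNorm W (Tbell Adm Q C α u - Tbell Adm Q C α w) ≤
      ENNReal.ofReal (α * β) * WNorm W (u - w) := by
  rw [← ENNReal.ofReal_toReal (wNorm_sub_lt_top hW hu hw).ne,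
    ← ENNReal.ofReal_mul (mul_nonneg hα hβ)]
  exact (wNorm_le_ofReal_iff hW (by positivity)).2 fun x =>
    abs_tbell_sub_tbell_le hW (hAne x) (hCbdd x) hα (hWint x) (hQW x) humeas hu hwmeas hw

theorem eq_of_isFixedPt_tbell (hW : ∀ x, 0 < W x) (hAne : ∀ x, (Adm x).Nonempty)
    (hCbdd : ∀ x, BddBelow ((fun a => C (x, a)) '' Adm x)) (hα : 0 ≤ α) (hβ : 0 ≤ β)
    (hγ : α * β < 1) (hWint : ∀ x, ∀ a ∈ Adm x, Integrable W (Q (x, a)))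
    (hQW : ∀ x, ∀ a ∈ Adm x, ∫ y, W y ∂(Q (x, a)) ≤ β * W x)
    (humeas : Measurable u) (hu : WNorm W u < ⊤) (hwmeas : Measurable w) (hw : WNorm W w < ⊤)
    (hufix : Function.IsFixedPt (Tbell Adm Q C α) u)
    (hwfix : Function.IsFixedPt (Tbell Adm Q C α) w) : u = w := by
  have hcontr : WNorm W (u - w) ≤ ENNReal.ofReal (α * β) * WNorm W (u - w) := by
    simpa only [hufix.eq, hwfix.eq] using
      wNorm_tbell_sub_tbell_le hW hAne hCbdd hα hβ hWint hQW humeas hu hwmeas hw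
  refine eq_of_wNorm_sub_eq_zero hW (by_contra fun hne => hcontr.not_gt ?_)
  calc ENNReal.ofReal (α * β) * WNorm W (u - w)
      < 1 * WNorm W (u - w) := ENNReal.mul_lt_mul_left hne (wNorm_sub_lt_top hW hu hw).ne
        (ENNReal.ofReal_lt_one.2 hγ)
    _ = WNorm W (u - w) := one_mul _

end Bellman

theorem policy_improvement_fixed_implies_optimal_general {X A : Type*}
    [MeasurableSpace X] [MeasurableSpace A] {Adm : X → Set A} (hAne : ∀ x, (Adm x).Nonempty)
    {Q : Kernel (X × A) X} {C : X × A → ℝ}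
    (hCbdd : ∀ x, BddBelow ((fun a => C (x, a)) '' Adm x))
    {α β : ℝ} (hα : 0 ≤ α) (hβ : 0 ≤ β) (hγ : α * β < 1)
    {W : X → ℝ} (hWmeas : Measurable W) (hW : ∀ x, 0 < W x)
    (hQW : ∀ x, ∀ a ∈ Adm x,
      ∫⁻ y, ENNReal.ofReal (W y) ∂(Q (x, a)) ≤ ENNReal.ofReal (β * W x))
    {g₁ : X → A} {v₁ : X → ℝ} (hv₁meas : Measurable v₁) (hv₁W : WNorm W v₁ < ⊤)
    (hv₁fix : ∀ x, v₁ x = C (x, g₁ x) + α * ∫ y, v₁ y ∂(Q (x, g₁ x)))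
    (hg₁imp : ∀ x, Tbell Adm Q C α v₁ x = C (x, g₁ x) + α * ∫ y, v₁ y ∂(Q (x, g₁ x)))
    {vstar : X → ℝ} (hvstarmeas : Measurable vstar) (hvstarW : WNorm W vstar < ⊤)
    (hvstarfix : ∀ x, vstar x = Tbell Adm Q C α vstar x) :
    v₁ = vstar := by
  have hW₀ (μ : Measure X) : 0 ≤ᵐ[μ] W := .of_forall fun x => (hW x).le
  have hWint : ∀ x, ∀ a ∈ Adm x, Integrable W (Q (x, a)) := fun x a ha =>
    integrable_of_lintegral_ofReal_le hWmeas.aestronglyMeasurable (hW₀ _) (hQW x a ha)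
  have hQW' : ∀ x, ∀ a ∈ Adm x, ∫ y, W y ∂(Q (x, a)) ≤ β * W x := fun x a ha =>
    integral_le_of_lintegral_ofReal_le hWmeas.aestronglyMeasurable (hW₀ _)
      (mul_nonneg hβ (hW x).le) (hQW x a ha)
  have hv₁fixT : Function.IsFixedPt (Tbell Adm Q C α) v₁ :=
    funext fun x => (hg₁imp x).trans (hv₁fix x).symm
  exact eq_of_isFixedPt_tbell hW hAne hCbdd hα hβ hγ hWint hQW' hv₁meas hv₁W hvstarmeas hvstarW
    hv₁fixT (funext fun x => (hvstarfix x).symm)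

/-- Under (GC) and (CC), if the improvement policy `g₁` (with
`T(v₀ᵉ) = T_{g₁}(v₀ᵉ)`) satisfies `V_{g₁} = v₀ᵉ`, then `V_{g₁}` equals the
unique lower semicontinuous fixed point `v*` of `T` of finite `W`-norm, so `g₁`
is optimal (Lemma 1(d) of the paper). -/
theorem policy_improvement_fixed_implies_optimal {X A : Type*}
    [MetricSpace X] [PolishSpace X] [MeasurableSpace X] [BorelSpace X]
    [MetricSpace A] [PolishSpace A] [MeasurableSpace A] [BorelSpace A]
    (Adm : X → Set A) (hAne : ∀ x, (Adm x).Nonempty)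
    (hKmeas : MeasurableSet {p : X × A | p.2 ∈ Adm p.1})
    (Q : Kernel (X × A) X) [IsMarkovKernel Q]
    (C : X × A → ℝ) (hCmeas : Measurable C)
    (α : ℝ) (hα0 : 0 < α) (hα1 : α < 1)
    (M β : ℝ) (hM : 0 < M) (hβ : 1 < β)
    (W : X → ℝ) (hWmeas : Measurable W) (hW1 : ∀ x, 1 ≤ W x)
    (hCW : ∀ x, ∀ a ∈ Adm x, |C (x, a)| ≤ M * W x)
    (hQW : ∀ x, ∀ a ∈ Adm x,
      ∫⁻ y, ENNReal.ofReal (W y) ∂(Q (x, a)) ≤ ENNReal.ofReal (β * W x))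
    (hγ : α * β < 1)
    (hAcomp : ∀ x, IsCompact (Adm x))
    (hAusc : ∀ x, ∀ U : Set A, IsOpen U → Adm x ⊆ U → ∀ᶠ x' in 𝓝 x, Adm x' ⊆ U)
    (hClsc : LowerSemicontinuousOn C {p : X × A | p.2 ∈ Adm p.1})
    (hQweak : ∀ g : X → ℝ, Continuous g → (∃ b, ∀ y, |g y| ≤ b) →
      ContinuousOn (fun p : X × A => ∫ y, g y ∂(Q p)) {p : X × A | p.2 ∈ Adm p.1})
    (hWcont : Continuous W)
    (hQWcont : ContinuousOn (fun p : X × A => ∫ y, W y ∂(Q p))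
      {p : X × A | p.2 ∈ Adm p.1})
    (g₀ : X → A) (hg₀ : Measurable g₀) (hg₀sel : ∀ x, g₀ x ∈ Adm x)
    (v₀ : X → ℝ) (hv₀meas : Measurable v₀) (hv₀W : WNorm W v₀ < ⊤)
    (hv₀fix : ∀ x, v₀ x = C (x, g₀ x) + α * ∫ y, v₀ y ∂(Q (x, g₀ x)))
    (e : X → ℝ) (hE : ∀ x, (e x : EReal) = lscEnvE v₀ x)
    (g₁ : X → A) (hg₁ : Measurable g₁) (hg₁sel : ∀ x, g₁ x ∈ Adm x)
    (hg₁imp : ∀ x, Tbell Adm Q C α e x = C (x, g₁ x) + α * ∫ y, e y ∂(Q (x, g₁ x)))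
    (v₁ : X → ℝ) (hv₁meas : Measurable v₁) (hv₁W : WNorm W v₁ < ⊤)
    (hv₁fix : ∀ x, v₁ x = C (x, g₁ x) + α * ∫ y, v₁ y ∂(Q (x, g₁ x)))
    (vstar : X → ℝ) (hvstarlsc : LowerSemicontinuous vstar)
    (hvstarW : WNorm W vstar < ⊤)
    (hvstarfix : ∀ x, vstar x = Tbell Adm Q C α vstar x)
    (heq : v₁ = e) :
    v₁ = vstar := by
  subst heq
  exact policy_improvement_fixed_implies_optimal_general hAne
    (fun x => ⟨-(M * W x), Set.forall_mem_image.2 fun a ha => neg_le_of_abs_le (hCW x a ha)⟩)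
    hα0.le (zero_le_one.trans hβ.le) hγ hWmeas (fun x => one_pos.trans_le (hW1 x)) hQW
    hv₁meas hv₁W hv₁fix hg₁imp hvstarlsc.measurable hvstarW hvstarfix
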